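/- Suppose v_0 : ℝ → ℝ is measurable and satisfies, for all t > 0 and x ∈ ℝ, ∫_ℝ (2π sinh(2t))^{−1/2} exp(−(1/2)(cosh(2t)/sinh(2t)) y² − (1/2)(sinh(2t)/cosh(2t)) x²) |v_0(y + x/cosh(2t))| dy < ∞. Then for all t > 0 and x ∈ ℝ, ∫_{C_W} v_0(√(2t) w(1) + x) exp(−t ∫₀¹ (x + √(2t) w(s))² ds) dm_W(w) = ∫_ℝ (2π sinh(2t))^{−1/2} exp(−(1/2)(cosh(2t)/sinh(2t)) y² − (1/2)(sinh(2t)/cosh(2t)) x²) v_0(y + x/cosh(2t)) dy. -/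

import Mathlib

/-!
The Wiener integral is computed by time slicing. Replace `∫₀¹ (x + √(2t) w(s))² ds` by its trapezoidal
sum with `n` steps. The finite-dimensional distributions of the Wiener measure turn the resulting
expectation into an `n`-fold composition of integral operators, whose kernel at `(u, v)` is a heat
kernel at time `ε = t / n` times the weight `exp (-ε (u² + v²) / 2)` (`lintegral_chain`).

The symmetric trapezoidal weight makes this kernel *exactly* a Mehler kernel, of frequency
`ω = √(1 + ε²)` and time `τ = 2 arsinh ε` (`mehler_step`). Since Mehler kernels of a fixed frequency
form a semigroup in time (`mehler_semigroup`), the discretized Wiener integral of `f` is the integral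
of `f` against the Mehler kernel of frequency `ω` and time `n τ` (`discrete_mehler`).

As `n → ∞`, `ω → 1` and `n τ → 2 t`; dominated convergence on both sides identifies, for bounded
continuous test functions, the weighted law of `x + √(2t) w(1)` with the Mehler density
(`map_weighted_eq`). Both sides of the theorem are the integral of `v₀` against this measure.
-/

open MeasureTheory Real Filter Topology

noncomputable section


/-- The classical Wiener space: continuous functions on `[0,1]` vanishing at `0`. -/
def CW : Type := {w : C(Set.Icc (0:ℝ) 1, ℝ) // w ⟨0, by norm_num⟩ = 0}

instance : TopologicalSpace CW := by unfold CW; infer_instance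
instance : MeasurableSpace CW := borel CW

/-- Evaluation of an element of the Wiener space at a time `s` (clamped to `[0,1]`). -/
def CW.eval (w : CW) (s : ℝ) : ℝ := w.1 (Set.projIcc (0:ℝ) 1 zero_le_one s)

/-- The value preceding index `i`, with the convention that it is `0` for `i = 0`. -/
def prevVal {n : ℕ} (v : Fin n → ℝ) (i : Fin n) : ℝ :=
  if h : (i : ℕ) = 0 then 0 else v ⟨(i : ℕ) - 1, by have := i.isLt; omega⟩

/-- The normal (Gaussian) density of the finite-dimensional distributions of Brownian
motion at times `t 0 < t 1 < ⋯ < t (n-1)`. -/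
def normalDensity {n : ℕ} (t : Fin n → ℝ) (ξ : Fin n → ℝ) : ℝ :=
  (Real.sqrt ((2 * π) ^ n * ∏ i, (t i - prevVal t i)))⁻¹ *
    Real.exp (-(1 / 2) * ∑ i, (ξ i - prevVal ξ i) ^ 2 / (t i - prevVal t i))

/-- `μ` is the Wiener measure: a probability measure on `CW` whose finite-dimensional
distributions at times `0 < t 0 < t 1 < ⋯ < t (n-1) ≤ 1` have the normal density. -/
structure IsWienerMeasure (μ : Measure CW) : Prop where
  prob : IsProbabilityMeasure μ
  fdd : ∀ (n : ℕ) (t : Fin n → ℝ), StrictMono t → (∀ i, 0 < t i) → (∀ i, t i ≤ 1) →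
    Measure.map (fun (w : CW) (i : Fin n) => w.eval (t i)) μ =
      MeasureTheory.volume.withDensity (fun ξ => ENNReal.ofReal (normalDensity t ξ))

/-- The Feynman–Kac type integral of the paper:
`S(v₀,c)(t,x) = ∫_{C_W} v₀(√(2t) w(1)+x) exp(−t∫₀¹ (x+√(2t)w(s))² ds)
  exp(−t∫₀¹ c(t(1−s), √(2t)w(s)+x) ds) dm_W(w)`. -/
def wienerFK (μ : Measure CW) (v₀ : ℝ → ℝ) (c : ℝ → ℝ → ℝ) (t x : ℝ) : ℝ :=
  ∫ w : CW,
    v₀ (Real.sqrt (2 * t) * w.eval 1 + x) *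
      Real.exp (-(t * ∫ s in (0:ℝ)..1, (x + Real.sqrt (2 * t) * w.eval s) ^ 2)) *
      Real.exp (-(t * ∫ s in (0:ℝ)..1,
        c (t * (1 - s)) (Real.sqrt (2 * t) * w.eval s + x))) ∂μ

open scoped ENNReal

/-! ### The Mehler kernel -/

/-- The Mehler kernel of a harmonic oscillator of frequency `ω` at (hyperbolic) time `s`. -/
def mehler (ω s u v : ℝ) : ℝ :=
  √(ω / (2 * π * sinh s)) *
    exp (-(ω / 2) * (cosh s / sinh s) * (u ^ 2 + v ^ 2) + ω * u * v / sinh s)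

lemma mehler_nonneg (ω s u v : ℝ) : 0 ≤ mehler ω s u v := by
  unfold mehler; positivity

lemma measurable_mehler (ω s : ℝ) :
    Measurable (Function.uncurry fun u v => ENNReal.ofReal (mehler ω s u v)) := by
  unfold mehler Function.uncurry; fun_prop

/-- The Mehler kernel after completing the square in the second variable. -/
lemma mehler_eq_shift (ω : ℝ) {s : ℝ} (hs : 0 < s) (u v : ℝ) :
    mehler ω s u v = √(ω / (2 * π * sinh s)) *
      exp (-(ω / 2) * (cosh s / sinh s) * (v - u / cosh s) ^ 2
        - (ω / 2) * (sinh s / cosh s) * u ^ 2) := by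
  have h1 : sinh s ≠ 0 := (sinh_pos_iff.2 hs).ne'
  have h2 : cosh s ≠ 0 := (cosh_pos s).ne'
  unfold mehler
  congr 2
  field_simp
  rw [sinh_sq]
  ring

lemma lintegral_gaussian_shift (C m K : ℝ) {A : ℝ} (hA : 0 < A) (hC : 0 ≤ C) :
    ∫⁻ v, ENNReal.ofReal (C * exp (-A * (v - m) ^ 2 + K)) =
      ENNReal.ofReal (C * √(π / A) * exp K) := by
  have hi : Integrable fun v : ℝ => C * exp (-A * (v - m) ^ 2 + K) := by
    have := (((integrable_exp_neg_mul_sq hA).comp_sub_right m).mul_const (exp K)).const_mul C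
    simpa only [exp_add] using this
  rw [← ofReal_integral_eq_lintegral_ofReal hi (ae_of_all _ fun v => by positivity)]
  congr 1
  simp only [exp_add]
  rw [integral_const_mul, integral_mul_const,
    integral_sub_right_eq_self (fun v => exp (-A * v ^ 2)) m, integral_gaussian]
  ring

/-- The semigroup (Chapman–Kolmogorov) property of the Mehler kernel: the integrand is a Gaussian
in `v` whose quadratic coefficient is governed by
`coth s + coth r = sinh (s + r) / (sinh s * sinh r)`. -/
lemma mehler_semigroup {ω s r : ℝ} (hω : 0 < ω) (hs : 0 < s) (hr : 0 < r) (u z : ℝ) :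
    ∫⁻ v, ENNReal.ofReal (mehler ω s u v) * ENNReal.ofReal (mehler ω r v z) =
      ENNReal.ofReal (mehler ω (s + r) u z) := by
  have h1 : 0 < sinh s := sinh_pos_iff.2 hs
  have h2 : 0 < sinh r := sinh_pos_iff.2 hr
  have h3 : 0 < sinh (s + r) := sinh_pos_iff.2 (by positivity)
  have hadd := sinh_add s r
  have hcadd := cosh_add s r
  set A : ℝ := ω * sinh (s + r) / (2 * sinh s * sinh r) with hA
  have hA0 : 0 < A := by positivity
  set C : ℝ := √(ω / (2 * π * sinh s)) * √(ω / (2 * π * sinh r)) with hC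
  set m : ℝ := (u * sinh r + z * sinh s) / sinh (s + r) with hm
  set K : ℝ := -(ω / 2) * (cosh (s + r) / sinh (s + r)) * (u ^ 2 + z ^ 2)
    + ω * u * z / sinh (s + r) with hK
  have key : ∀ v, ENNReal.ofReal (mehler ω s u v) * ENNReal.ofReal (mehler ω r v z) =
      ENNReal.ofReal (C * exp (-A * (v - m) ^ 2 + K)) := by
    intro v
    rw [← ENNReal.ofReal_mul (mehler_nonneg _ _ _ _)]
    congr 1
    unfold mehler
    rw [mul_mul_mul_comm, ← exp_add]
    congr 2
    have e1 := cosh_sq s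
    have e2 := cosh_sq r
    -- After clearing denominators only `cosh² = sinh² + 1` for `s` and `r` is needed.
    rw [hA, hm, hK, hcadd]
    rw [hadd] at h3 ⊢
    field_simp
    generalize sinh s = a at *
    generalize sinh r = b at *
    generalize cosh s = c at *
    generalize cosh r = d at *
    clear_value A C m K
    clear hA hC hm hK hadd hcadd
    linear_combination (-(b ^ 2 * u ^ 2)) * e1 - a ^ 2 * z ^ 2 * e2
  simp_rw [key]
  rw [lintegral_gaussian_shift C m K hA0 (by positivity)]
  congr 1
  unfold mehler
  congr 1
  rw [hC, ← sqrt_mul (by positivity), ← sqrt_mul (by positivity)]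
  congr 1
  rw [hA]
  field_simp

/-- For `cosh τ = 1 + 2 * ε ^ 2`, i.e. `τ = 2 * arsinh ε`, and `ω = √(1 + ε ^ 2)`, the Mehler kernel
is the heat kernel at time `ε` weighted by the trapezoidal rule for the quadratic potential. -/
lemma mehler_step {ε : ℝ} (hε : 0 < ε) (u v : ℝ) :
    mehler √(1 + ε ^ 2) (2 * arsinh ε) u v =
      √(1 / (4 * π * ε)) * exp (-(v - u) ^ 2 / (4 * ε) - ε * (u ^ 2 + v ^ 2) / 2) := by
  have hω : 0 < √(1 + ε ^ 2) := by positivity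
  have hsq : √(1 + ε ^ 2) ^ 2 = 1 + ε ^ 2 := sq_sqrt (by positivity)
  have hs : sinh (2 * arsinh ε) = 2 * ε * √(1 + ε ^ 2) := by
    rw [sinh_two_mul, sinh_arsinh, cosh_arsinh]
  have hc : cosh (2 * arsinh ε) = 1 + 2 * ε ^ 2 := by
    rw [cosh_two_mul, sinh_arsinh, cosh_arsinh, hsq]; ring
  unfold mehler
  rw [hs, hc]
  refine congrArg₂ (· * ·) (congrArg _ ?_) (congrArg _ ?_)
  · field_simp
    ring
  · field_simp
    ring

/-! ### Iterated integral operators -/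

/-- The integral operator with kernel `K`. -/
def chainOp (K : ℝ → ℝ → ℝ≥0∞) (f : ℝ → ℝ≥0∞) : ℝ → ℝ≥0∞ := fun p => ∫⁻ q, K p q * f q

lemma measurable_chainOp {K : ℝ → ℝ → ℝ≥0∞} (hK : Measurable (Function.uncurry K))
    {f : ℝ → ℝ≥0∞} (hf : Measurable f) : Measurable (chainOp K f) := by
  have : Measurable fun z : ℝ × ℝ => Function.uncurry K z * f z.2 := by fun_prop
  exact this.lintegral_prod_right'

lemma mehler_iterate {ω τ : ℝ} (hω : 0 < ω) (hτ : 0 < τ) {f : ℝ → ℝ≥0∞} (hf : Measurable f)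
    (n : ℕ) (u : ℝ) :
    (chainOp fun u v => ENNReal.ofReal (mehler ω τ u v))^[n + 1] f u =
      ∫⁻ z, ENNReal.ofReal (mehler ω ((n + 1 : ℕ) * τ) u z) * f z := by
  induction n generalizing u with
  | zero => simp [chainOp]
  | succ n ih =>
    rw [Function.iterate_succ_apply']
    have hpos : 0 < ((n + 1 : ℕ) : ℝ) * τ := by positivity
    have h1 := measurable_mehler ω τ
    have h2 := measurable_mehler ω (((n + 1 : ℕ) : ℝ) * τ)
    have hm : Measurable fun z : ℝ × ℝ => ENNReal.ofReal (mehler ω τ u z.1) *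
        (ENNReal.ofReal (mehler ω (((n + 1 : ℕ) : ℝ) * τ) z.1 z.2) * f z.2) := by
      unfold mehler; fun_prop
    calc _ = ∫⁻ v, ∫⁻ z, ENNReal.ofReal (mehler ω τ u v) *
            (ENNReal.ofReal (mehler ω ((n + 1 : ℕ) * τ) v z) * f z) := by
          refine lintegral_congr fun v => ?_
          rw [ih v, lintegral_const_mul]
          unfold mehler; fun_prop
      _ = ∫⁻ z, ∫⁻ v, ENNReal.ofReal (mehler ω τ u v) *
            (ENNReal.ofReal (mehler ω ((n + 1 : ℕ) * τ) v z) * f z) :=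
          lintegral_lintegral_swap hm.aemeasurable
      _ = _ := by
          refine lintegral_congr fun z => ?_
          simp_rw [← mul_assoc]
          rw [lintegral_mul_const, mehler_semigroup hω hτ hpos]
          · congr 4
            push_cast; ring
          · unfold mehler; fun_prop

/-- Tonelli: the integral over `ℝⁿ` of a product of transition weights along the path
`p, ξ 0, …, ξ (n - 1)` is an iterated integral operator applied to the terminal function. -/
lemma lintegral_chain {K : ℝ → ℝ → ℝ≥0∞} (hK : Measurable (Function.uncurry K))
    {f : ℝ → ℝ≥0∞} (hf : Measurable f) (n : ℕ) (p : ℝ) :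
    ∫⁻ ξ : Fin n → ℝ, (∏ i : Fin n, K ((Fin.cons p ξ : Fin (n + 1) → ℝ) i.castSucc)
        ((Fin.cons p ξ : Fin (n + 1) → ℝ) i.succ)) *
        f ((Fin.cons p ξ : Fin (n + 1) → ℝ) (Fin.last n)) = (chainOp K)^[n] f p := by
  induction n generalizing p with
  | zero =>
    rw [lintegral_unique]
    simp [volume_pi]
  | succ n ih =>
    have hcons : ∀ j : Fin (n + 1),
        Measurable fun z : ℝ × (Fin n → ℝ) => (Fin.cons z.1 z.2 : Fin (n + 1) → ℝ) j := by
      intro j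
      refine Fin.cases ?_ (fun i => ?_) j
      · simpa using measurable_fst
      · simp only [Fin.cons_succ]; fun_prop
    have hmeas : Measurable fun z : ℝ × (Fin n → ℝ) =>
        (∏ i : Fin n, K ((Fin.cons z.1 z.2 : Fin (n + 1) → ℝ) i.castSucc)
          ((Fin.cons z.1 z.2 : Fin (n + 1) → ℝ) i.succ)) *
          f ((Fin.cons z.1 z.2 : Fin (n + 1) → ℝ) (Fin.last n)) := by
      refine Measurable.mul (Finset.measurable_fun_prod _ fun i _ => ?_) (hf.comp (hcons _))
      exact hK.comp ((hcons i.castSucc).prodMk (hcons i.succ))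
    rw [← ((volume_preserving_piFinSuccAbove (fun _ : Fin (n + 1) => ℝ) 0).symm).lintegral_comp_emb
      (MeasurableEquiv.measurableEmbedding _)]
    have hfac : ∀ z : ℝ × (Fin n → ℝ),
        (∏ i : Fin (n + 1), K ((Fin.cons p (Fin.cons z.1 z.2 : Fin (n + 1) → ℝ) :
            Fin (n + 2) → ℝ) i.castSucc)
          ((Fin.cons p (Fin.cons z.1 z.2 : Fin (n + 1) → ℝ) : Fin (n + 2) → ℝ) i.succ)) *
        f ((Fin.cons p (Fin.cons z.1 z.2 : Fin (n + 1) → ℝ) : Fin (n + 2) → ℝ)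
          (Fin.last (n + 1))) =
        K p z.1 * ((∏ i : Fin n, K ((Fin.cons z.1 z.2 : Fin (n + 1) → ℝ) i.castSucc)
          ((Fin.cons z.1 z.2 : Fin (n + 1) → ℝ) i.succ)) *
          f ((Fin.cons z.1 z.2 : Fin (n + 1) → ℝ) (Fin.last n))) := by
      intro z
      rw [Fin.prod_univ_succ, mul_assoc, ← Fin.succ_last]
      simp only [Fin.cons_succ, Fin.castSucc_zero, Fin.cons_zero, ← Fin.succ_castSucc]
    have hK' : Measurable (K p) := hK.comp (measurable_const.prodMk measurable_id)
    have : ∀ z : ℝ × (Fin n → ℝ),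
        (MeasurableEquiv.piFinSuccAbove (fun _ : Fin (n + 1) => ℝ) 0).symm z = (Fin.cons z.1 z.2 : Fin (n + 1) → ℝ) := by
      intro z
      rw [MeasurableEquiv.piFinSuccAbove_symm_apply, Fin.insertNthEquiv_zero]
      rfl
    simp_rw [this, hfac]
    rw [Measure.volume_eq_prod, lintegral_prod _ (by fun_prop), Function.iterate_succ_apply']
    refine lintegral_congr fun q => ?_
    dsimp only
    rw [lintegral_const_mul]
    · rw [← ih q]
    · exact hmeas.comp (measurable_const.prodMk measurable_id)

lemma lintegral_affine {a : ℝ} (ha : 0 < a) (x : ℝ) {g : ℝ → ℝ≥0∞} (hg : Measurable g) :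
    ∫⁻ q, ENNReal.ofReal a * g (x + a * q) = ∫⁻ z, g z := by
  rw [← lintegral_add_left_eq_self g x]
  conv_rhs => rw [← Real.smul_map_volume_mul_left ha.ne']
  rw [lintegral_smul_measure, lintegral_map (by fun_prop) (by fun_prop), abs_of_pos ha,
    lintegral_const_mul _ (by fun_prop)]
  rfl

/-- The substitution `z = x + a * q` intertwines the operator with the rescaled kernel and the one
with kernel `K`. -/
lemma chainOp_affine_iterate {a : ℝ} (ha : 0 < a) (x : ℝ) {K : ℝ → ℝ → ℝ≥0∞}
    (hK : Measurable (Function.uncurry K)) {f : ℝ → ℝ≥0∞} (hf : Measurable f) (n : ℕ) (p : ℝ) :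
    (chainOp fun p q => ENNReal.ofReal a * K (x + a * p) (x + a * q))^[n] (fun q => f (x + a * q)) p
      = (chainOp K)^[n] f (x + a * p) := by
  have hm : ∀ n, Measurable ((chainOp K)^[n] f) := by
    intro n
    induction n with
    | zero => exact hf
    | succ n ih => rw [Function.iterate_succ_apply']; exact measurable_chainOp hK ih
  induction n generalizing p with
  | zero => rfl
  | succ n ih =>
    rw [Function.iterate_succ_apply', Function.iterate_succ_apply']
    have hK' : Measurable (K (x + a * p)) := hK.comp (measurable_const.prodMk measurable_id)
    have hmn := hm n
    simp only [chainOp]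
    rw [← lintegral_affine ha x (g := fun q => K (x + a * p) q * (chainOp K)^[n] f q)
      (by fun_prop)]
    refine lintegral_congr fun q => ?_
    rw [ih q, mul_assoc]

/-! ### Trapezoidal sums -/

/-- The composite trapezoidal sum of `h` on `[0,1]` with `n` steps. -/
def trapSum (h : ℝ → ℝ) (n : ℕ) : ℝ :=
  ∑ i ∈ Finset.range n, (h ((i : ℕ) / n) + h ((i + 1 : ℕ) / n)) / 2 * (1 / n)

lemma tendsto_trapSum {h : ℝ → ℝ} (hh : UniformContinuous h) :
    Tendsto (fun n : ℕ => trapSum h (n + 1)) atTop (𝓝 (∫ s in (0:ℝ)..1, h s)) := by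
  rw [Metric.tendsto_atTop]
  intro ε hε
  obtain ⟨δ, hδ, hu⟩ := Metric.uniformContinuous_iff.1 hh (ε / 2) (by positivity)
  obtain ⟨N, hN⟩ := exists_nat_one_div_lt hδ
  refine ⟨N, fun n hn => ?_⟩
  have hn' : 1 / ((n : ℝ) + 1) < δ := lt_of_le_of_lt (by gcongr) hN
  have hc := hh.continuous
  have hsplit : ∫ s in (0:ℝ)..1, h s = ∑ i ∈ Finset.range (n + 1),
      ∫ s in ((i : ℕ) / ((n + 1 : ℕ) : ℝ) : ℝ)..((i + 1 : ℕ) / ((n + 1 : ℕ) : ℝ)), h s := by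
    rw [intervalIntegral.sum_integral_adjacent_intervals
      (a := fun i : ℕ => (i : ℝ) / ((n + 1 : ℕ) : ℝ))
      (fun k _ => hc.intervalIntegrable _ _)]
    have : ((n : ℝ) + 1) ≠ 0 := by positivity
    simp [this]
  rw [hsplit, trapSum, dist_eq_norm, ← Finset.sum_sub_distrib]
  have hterm : ∀ i ∈ Finset.range (n + 1),
      ‖(h ((i : ℕ) / ((n + 1 : ℕ) : ℝ)) + h ((i + 1 : ℕ) / ((n + 1 : ℕ) : ℝ))) / 2 *
          (1 / ((n + 1 : ℕ) : ℝ)) -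
        ∫ s in ((i : ℕ) / ((n + 1 : ℕ) : ℝ) : ℝ)..((i + 1 : ℕ) / ((n + 1 : ℕ) : ℝ)), h s‖ ≤
      ε / 2 * (1 / ((n + 1 : ℕ) : ℝ)) := by
    intro i _
    set α : ℝ := (i : ℕ) / ((n + 1 : ℕ) : ℝ) with hα
    set β : ℝ := (i + 1 : ℕ) / ((n + 1 : ℕ) : ℝ) with hβ
    have hβα : β - α = 1 / ((n + 1 : ℕ) : ℝ) := by rw [hα, hβ]; push_cast; ring
    have hpos : (0 : ℝ) < 1 / ((n + 1 : ℕ) : ℝ) := by positivity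
    have hlt : β - α < δ := by rw [hβα]; push_cast; exact hn'
    rw [← hβα]
    have hconst : (h α + h β) / 2 * (β - α) = ∫ _ in α..β, (h α + h β) / 2 := by
      rw [intervalIntegral.integral_const, smul_eq_mul]; ring
    rw [hconst, ← intervalIntegral.integral_sub (by simp) (hc.intervalIntegrable _ _)]
    have hle : α ≤ β := by linarith
    refine (intervalIntegral.norm_integral_le_of_norm_le_const (C := ε / 2) fun s hs => ?_).trans ?_
    · rw [Set.uIoc_of_le hle] at hs
      have h1 := hu (a := α) (b := s)
        (by rw [Real.dist_eq, abs_lt]; constructor <;> linarith [hs.1, hs.2])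
      have h2 := hu (a := β) (b := s)
        (by rw [Real.dist_eq, abs_lt]; constructor <;> linarith [hs.1, hs.2])
      rw [Real.dist_eq, abs_lt] at h1 h2
      rw [Real.norm_eq_abs, abs_le]
      constructor <;> linarith [h1.1, h1.2, h2.1, h2.2]
    · rw [abs_of_nonneg (by linarith)]
  refine (norm_sum_le_of_le _ hterm).trans_lt ?_
  rw [Finset.sum_const, Finset.card_range, nsmul_eq_mul]
  have : (((n + 1 : ℕ) : ℝ)) ≠ 0 := by positivity
  field_simp
  linarith

/-! ### The time-discretized Wiener integral -/

instance : BorelSpace CW := ⟨rfl⟩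

lemma measurable_eval (s : ℝ) : Measurable fun w : CW => w.eval s := by
  have h1 : Continuous fun w : CW => (Subtype.val w : C(Set.Icc (0:ℝ) 1, ℝ)) :=
    continuous_subtype_val
  exact ((continuous_eval_const (F := C(Set.Icc (0:ℝ) 1, ℝ)) (Set.projIcc (0:ℝ) 1 zero_le_one s)).comp
    h1).measurable

lemma eval_zero (w : CW) : w.eval 0 = 0 := by
  unfold CW.eval
  rw [Set.projIcc_left]
  exact w.2

/-- The quadratic potential along the path `x + a * w`. -/
def pathSq (a x : ℝ) (w : CW) (s : ℝ) : ℝ := (x + a * w.eval s) ^ 2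

lemma uniformContinuous_pathSq (a x : ℝ) (w : CW) : UniformContinuous (pathSq a x w) := by
  have h1 : UniformContinuous fun y : Set.Icc (0:ℝ) 1 => (x + a * w.1 y) ^ 2 :=
    CompactSpace.uniformContinuous_of_continuous (by fun_prop)
  exact h1.comp (LipschitzWith.projIcc (zero_le_one' ℝ)).uniformContinuous

lemma measurable_trapSum (a x : ℝ) (n : ℕ) : Measurable fun w : CW => trapSum (pathSq a x w) n := by
  have := measurable_eval
  unfold trapSum pathSq
  fun_prop

lemma measurable_integral_pathSq (a x : ℝ) :
    Measurable fun w : CW => ∫ s in (0:ℝ)..1, pathSq a x w s :=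
  measurable_of_tendsto_metrizable (fun n => measurable_trapSum a x (n + 1))
    (tendsto_pi_nhds.2 fun w => tendsto_trapSum (uniformContinuous_pathSq a x w))

lemma prevVal_eq_cons {n : ℕ} (v : Fin n → ℝ) (i : Fin n) :
    prevVal v i = (Fin.cons 0 v : Fin (n + 1) → ℝ) i.castSucc := by
  obtain _ | n := n
  · exact i.elim0
  · refine Fin.cases ?_ (fun j => ?_) i
    · simp [prevVal]
    · rw [← Fin.succ_castSucc, Fin.cons_succ]
      simp [prevVal]
      rfl

/-- The equispaced times `(i + 1) / n`. -/
def unifTime (n : ℕ) (i : Fin n) : ℝ := ((i : ℕ) + 1 : ℕ) / (n : ℝ)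

lemma cons_unifTime (n : ℕ) (j : Fin (n + 1)) :
    (Fin.cons 0 (unifTime n) : Fin (n + 1) → ℝ) j = (j : ℕ) / (n : ℝ) := by
  refine Fin.cases ?_ (fun i => ?_) j <;> simp [unifTime]

lemma cons_eval (w : CW) (n : ℕ) (j : Fin (n + 1)) :
    (Fin.cons 0 (fun i => w.eval (unifTime n i)) : Fin (n + 1) → ℝ) j = w.eval ((j : ℕ) / n) := by
  refine Fin.cases ?_ (fun i => ?_) j <;> simp [unifTime, eval_zero]

lemma normalDensity_unifTime (n : ℕ) (ξ : Fin (n + 1) → ℝ) :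
    normalDensity (unifTime (n + 1)) ξ = ∏ i : Fin (n + 1),
      (√(2 * π * (1 / ((n + 1 : ℕ) : ℝ))))⁻¹ *
        exp (-(1 / 2) * (((Fin.cons 0 ξ : Fin (n + 2) → ℝ) i.succ -
          (Fin.cons 0 ξ : Fin (n + 2) → ℝ) i.castSucc) ^ 2 / (1 / ((n + 1 : ℕ) : ℝ)))) := by
  have hd : ∀ i : Fin (n + 1), unifTime (n + 1) i - prevVal (unifTime (n + 1)) i =
      1 / ((n + 1 : ℕ) : ℝ) := by
    intro i
    rw [prevVal_eq_cons, cons_unifTime, unifTime]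
    push_cast [Fin.val_castSucc]
    ring
  unfold normalDensity
  simp_rw [hd, prevVal_eq_cons, Fin.cons_succ]
  rw [Finset.prod_mul_distrib, ← exp_sum, Finset.mul_sum, Finset.prod_const, Finset.prod_const,
    Finset.card_univ, Fintype.card_fin, ← mul_pow, inv_pow]
  congr 2
  rw [sqrt_eq_iff_mul_self_eq (by positivity) (by positivity), ← mul_pow, mul_self_sqrt (by positivity)]

/-- One step of the discretized functional in the coordinates of `w`: the increment density times the
trapezoidal weight is a rescaled Mehler kernel. -/
lemma step_eq {t δ : ℝ} (ht : 0 < t) (hδ : 0 < δ) (x p q : ℝ) :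
    (√(2 * π * δ))⁻¹ * exp (-(1 / 2) * ((q - p) ^ 2 / δ)) *
      exp (-(t * (((x + √(2 * t) * p) ^ 2 + (x + √(2 * t) * q) ^ 2) / 2 * δ))) =
    √(2 * t) * mehler √(1 + (t * δ) ^ 2) (2 * arsinh (t * δ))
      (x + √(2 * t) * p) (x + √(2 * t) * q) := by
  have hsq : √(2 * t) ^ 2 = 2 * t := sq_sqrt (by positivity)
  rw [mehler_step (by positivity), mul_assoc, ← exp_add, ← mul_assoc √(2 * t),
    ← sqrt_mul (by positivity), ← sqrt_inv]
  refine congrArg₂ (· * ·) (congrArg _ ?_) (congrArg _ ?_)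
  · field_simp
    norm_num
  · have : (x + √(2 * t) * q - (x + √(2 * t) * p)) ^ 2 = 2 * t * (q - p) ^ 2 := by
      linear_combination (q - p) ^ 2 * hsq
    rw [this]
    field_simp
    ring

/-- Exact evaluation of the time-discretized Wiener integral: by the finite-dimensional distributions
it is an `n`-fold composition of Mehler kernels, which the semigroup property collapses. -/
lemma discrete_mehler {μ : Measure CW} (hμ : IsWienerMeasure μ) {t : ℝ} (ht : 0 < t) (x : ℝ)
    {f : ℝ → ℝ≥0∞} (hf : Measurable f) (n : ℕ) :
    ∫⁻ w : CW, ENNReal.ofReal (exp (-(t * trapSum (pathSq √(2 * t) x w) (n + 1)))) *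
        f (x + √(2 * t) * w.eval 1) ∂μ =
      ∫⁻ z, ENNReal.ofReal (mehler √(1 + (t * (1 / (n + 1 : ℕ))) ^ 2)
        ((n + 1 : ℕ) * (2 * arsinh (t * (1 / (n + 1 : ℕ))))) x z) * f z := by
  set a := √(2 * t) with ha
  have ha0 : 0 < a := by positivity
  set δ : ℝ := 1 / ((n + 1 : ℕ) : ℝ) with hδ
  have hδ0 : 0 < δ := by positivity
  set W : (Fin (n + 1) → ℝ) → Fin (n + 2) → ℝ := fun ξ => Fin.cons 0 ξ with hW
  have hWm : ∀ j, Measurable fun ξ => W ξ j := by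
    intro j
    refine Fin.cases ?_ (fun i => ?_) j
    · simp [hW]
    · simp only [hW, Fin.cons_succ]; fun_prop
  set g : (Fin (n + 1) → ℝ) → ℝ≥0∞ := fun ξ =>
    (∏ i : Fin (n + 1), ENNReal.ofReal (exp (-(t * (((x + a * W ξ i.castSucc) ^ 2 +
      (x + a * W ξ i.succ) ^ 2) / 2 * δ))))) * f (x + a * W ξ (Fin.last (n + 1))) with hg
  have hgm : Measurable g := by fun_prop
  have h1 : ∀ w : CW, ENNReal.ofReal (exp (-(t * trapSum (pathSq a x w) (n + 1)))) *
        f (x + a * w.eval 1) = g (fun i => w.eval (unifTime (n + 1) i)) := by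
    intro w
    simp only [hg, hW, cons_eval]
    rw [← ENNReal.ofReal_prod_of_nonneg (fun _ _ => by positivity), ← exp_sum,
      Finset.sum_neg_distrib, ← Finset.mul_sum, trapSum, Finset.sum_range]
    have : ((n + 1 : ℕ) : ℝ) ≠ 0 := by positivity
    simp only [Fin.val_castSucc, Fin.val_succ, Fin.val_last, pathSq, div_self this]
    rfl
  have hfdd := hμ.fdd (n + 1) (unifTime (n + 1))
    (fun i j hij => by unfold unifTime; gcongr; exact hij)
    (fun i => by unfold unifTime; positivity)
    (fun i => by unfold unifTime; rw [div_le_one (by positivity)]; exact_mod_cast i.isLt)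
  have hdm : Measurable fun ξ => ENNReal.ofReal (normalDensity (unifTime (n + 1)) ξ) := by
    simp_rw [normalDensity_unifTime]; fun_prop
  have hem : Measurable fun (w : CW) (i : Fin (n + 1)) => w.eval (unifTime (n + 1) i) :=
    measurable_pi_iff.2 fun i => measurable_eval _
  simp_rw [h1]
  rw [← lintegral_map hgm hem, hfdd, lintegral_withDensity_eq_lintegral_mul _ hdm hgm]
  have hMm := measurable_mehler √(1 + (t * δ) ^ 2) (2 * arsinh (t * δ))
  have hτ : 0 < 2 * arsinh (t * δ) := by
    have := arsinh_pos_iff.2 (mul_pos ht hδ0)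
    positivity
  have hchain := lintegral_chain
    (K := fun p q => ENNReal.ofReal a * ENNReal.ofReal (mehler √(1 + (t * δ) ^ 2)
      (2 * arsinh (t * δ)) (x + a * p) (x + a * q)))
    (by unfold mehler Function.uncurry; fun_prop)
    (f := fun q => f (x + a * q)) (by fun_prop) (n + 1) 0
  rw [chainOp_affine_iterate ha0 x hMm hf, mehler_iterate (by positivity) hτ hf, mul_zero,
    add_zero] at hchain
  rw [← hchain]
  refine lintegral_congr fun ξ => ?_
  simp only [Pi.mul_apply, hg]
  rw [normalDensity_unifTime, ENNReal.ofReal_prod_of_nonneg (fun _ _ => by positivity), ← mul_assoc,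
    ← Finset.prod_mul_distrib]
  congr 1
  refine Finset.prod_congr rfl fun i _ => ?_
  rw [← ENNReal.ofReal_mul (by positivity), ← ENNReal.ofReal_mul (by positivity)]
  exact congrArg _ (step_eq ht hδ0 x _ _)

/-! ### The limit -/

/-- `2 * n * arsinh (t / n) → 2 * t` (with `n + 1` for `n`), from `arsinh' 0 = 1`. -/
lemma tendsto_time {t : ℝ} (ht : 0 < t) : Tendsto (fun n : ℕ =>
    ((n + 1 : ℕ) : ℝ) * (2 * arsinh (t * (1 / ((n + 1 : ℕ) : ℝ))))) atTop (𝓝 (2 * t)) := by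
  have h0 : Tendsto (fun n : ℕ => t * (1 / ((n + 1 : ℕ) : ℝ))) atTop (𝓝[≠] 0) := by
    refine tendsto_nhdsWithin_iff.2 ⟨?_, Eventually.of_forall fun n => ?_⟩
    · have := (tendsto_one_div_add_atTop_nhds_zero_nat (𝕜 := ℝ)).const_mul t
      simpa using this
    · have : 0 < t * (1 / ((n + 1 : ℕ) : ℝ)) := by positivity
      exact this.ne'
  have h1 := (hasDerivAt_iff_tendsto_slope_zero.1 (hasDerivAt_arsinh 0)).comp h0
  have h2 := h1.const_mul (2 * t)
  simp only [zero_add, arsinh_zero, sub_zero, smul_eq_mul] at h2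
  norm_num at h2
  refine h2.congr fun n => ?_
  have : (n : ℝ) + 1 ≠ 0 := by positivity
  push_cast
  field_simp

/-- A Gaussian bound whose exponent does not depend on `ω` and `s`, for dominated convergence. -/
lemma mehler_le {ω s : ℝ} (hω : 1 ≤ ω) (hs : 0 < s) (u v : ℝ) :
    mehler ω s u v ≤ √(ω / (2 * π * sinh s)) * exp (-(1 / 4) * (v - 0) ^ 2 + u ^ 2 / 2) := by
  have h1 : 0 < sinh s := sinh_pos_iff.2 hs
  have h2 : 0 < cosh s := cosh_pos s
  have hcoth : 1 ≤ cosh s / sinh s := by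
    rw [one_le_div h1]; exact (sinh_lt_cosh s).le
  have hb : (u / cosh s) ^ 2 ≤ u ^ 2 := by
    rw [div_pow]
    exact div_le_self (sq_nonneg _) (one_le_pow₀ (one_le_cosh s))
  rw [mehler_eq_shift ω hs]
  gcongr
  have h3 : 0 ≤ (ω / 2) * (sinh s / cosh s) * u ^ 2 := by positivity
  have h4 : 1 / 2 ≤ (ω / 2) * (cosh s / sinh s) := by nlinarith
  have h5 := mul_le_mul_of_nonneg_right h4 (sq_nonneg (v - u / cosh s))
  nlinarith [sq_nonneg (v - 2 * (u / cosh s))]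

/-- The frequency `√(1 + (t / n) ^ 2)` and time `2 * n * arsinh (t / n)` of the exact discrete kernel
tend to `1` and `2 * t`, so it converges to the Mehler kernel. -/
lemma tendsto_lintegral_mehler {t : ℝ} (ht : 0 < t) (x : ℝ) {f : ℝ → ℝ≥0∞} (hf : Measurable f)
    {C : ℝ≥0∞} (hC : C ≠ ∞) (hfC : ∀ z, f z ≤ C) :
    Tendsto (fun n : ℕ => ∫⁻ z, ENNReal.ofReal (mehler √(1 + (t * (1 / (n + 1 : ℕ))) ^ 2)
        ((n + 1 : ℕ) * (2 * arsinh (t * (1 / (n + 1 : ℕ))))) x z) * f z) atTop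
      (𝓝 (∫⁻ z, ENNReal.ofReal (mehler 1 (2 * t) x z) * f z)) := by
  set ω : ℕ → ℝ := fun n => √(1 + (t * (1 / ((n + 1 : ℕ) : ℝ))) ^ 2) with hω
  set s : ℕ → ℝ := fun n => ((n + 1 : ℕ) : ℝ) * (2 * arsinh (t * (1 / ((n + 1 : ℕ) : ℝ)))) with hs
  have hωl : Tendsto ω atTop (𝓝 1) := by
    have h0 := (tendsto_one_div_add_atTop_nhds_zero_nat (𝕜 := ℝ)).const_mul t
    have h1 := ((h0.pow 2).const_add 1).sqrt
    simpa [hω] using h1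
  have hsl : Tendsto s atTop (𝓝 (2 * t)) := tendsto_time ht
  have hω1 : ∀ n, 1 ≤ ω n := fun n => by
    rw [hω]; exact one_le_sqrt.2 (by linarith [sq_nonneg (t * (1 / ((n + 1 : ℕ) : ℝ)))])
  have hs0 : ∀ n, 0 < s n := fun n => by
    have := arsinh_pos_iff.2 (show 0 < t * (1 / ((n + 1 : ℕ) : ℝ)) by positivity)
    rw [hs]; positivity
  have hsinh : sinh (2 * t) ≠ 0 := (sinh_pos_iff.2 (by positivity)).ne'
  have hsh : Tendsto (fun n => sinh (s n)) atTop (𝓝 (sinh (2 * t))) :=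
    (continuous_sinh.tendsto _).comp hsl
  have hch : Tendsto (fun n => cosh (s n)) atTop (𝓝 (cosh (2 * t))) :=
    (continuous_cosh.tendsto _).comp hsl
  have hpre : Tendsto (fun n => √(ω n / (2 * π * sinh (s n)))) atTop
      (𝓝 √(1 / (2 * π * sinh (2 * t)))) :=
    (hωl.div (hsh.const_mul (2 * π)) (by positivity)).sqrt
  set B := √(1 / (2 * π * sinh (2 * t))) + 1 with hB
  have hpreB : ∀ᶠ n in atTop, √(ω n / (2 * π * sinh (s n))) ≤ B :=
    hpre.eventually_le_const (by linarith)
  have hker : ∀ z, Tendsto (fun n => mehler (ω n) (s n) x z) atTop (𝓝 (mehler 1 (2 * t) x z)) := by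
    intro z
    unfold mehler
    refine hpre.mul ((continuous_exp.tendsto _).comp ?_)
    exact (((hωl.div_const 2).neg.mul (hch.div hsh hsinh)).mul_const _).add
      (((hωl.mul_const x).mul_const z).div hsh hsinh)
  refine tendsto_lintegral_filter_of_dominated_convergence
    (fun z => ENNReal.ofReal (B * exp (-(1 / 4) * (z - 0) ^ 2 + x ^ 2 / 2)) * C)
    (Eventually.of_forall fun n => by unfold mehler; fun_prop) ?_ ?_ ?_
  · filter_upwards [hpreB] with n hn
    refine ae_of_all _ fun z => ?_
    gcongr
    · exact (mehler_le (hω1 n) (hs0 n) x z).trans (by gcongr)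
    · exact hfC z
  · rw [lintegral_mul_const _ (by fun_prop),
      lintegral_gaussian_shift B 0 (x ^ 2 / 2) (by norm_num) (by positivity)]
    exact ENNReal.mul_ne_top ENNReal.ofReal_ne_top hC
  · refine ae_of_all _ fun z => ?_
    refine ENNReal.Tendsto.mul_const ((ENNReal.continuous_ofReal.tendsto _).comp (hker z)) ?_
    exact Or.inr (ne_top_of_le_ne_top hC (hfC z))

lemma tendsto_lintegral_trapSum (μ : Measure CW) [IsProbabilityMeasure μ] {t : ℝ} (ht : 0 < t)
    (a x : ℝ) {f : ℝ → ℝ≥0∞} (hf : Measurable f)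
    {C : ℝ≥0∞} (hC : C ≠ ∞) (hfC : ∀ z, f z ≤ C) :
    Tendsto (fun n : ℕ => ∫⁻ w : CW, ENNReal.ofReal (exp (-(t * trapSum (pathSq a x w) (n + 1)))) *
        f (x + a * w.eval 1) ∂μ) atTop
      (𝓝 (∫⁻ w : CW, ENNReal.ofReal (exp (-(t * ∫ s in (0:ℝ)..1, pathSq a x w s))) *
        f (x + a * w.eval 1) ∂μ)) := by
  have hm := measurable_trapSum a x
  have he := measurable_eval 1
  refine tendsto_lintegral_filter_of_dominated_convergence (fun _ => C)
    (Eventually.of_forall fun n => by fun_prop) (Eventually.of_forall fun n => ?_) ?_ ?_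
  · refine ae_of_all _ fun w => ?_
    have hnn : 0 ≤ trapSum (pathSq a x w) (n + 1) := by
      unfold trapSum pathSq; positivity
    calc _ ≤ 1 * C := by
          gcongr
          · rw [← ENNReal.ofReal_one]
            refine ENNReal.ofReal_le_ofReal (exp_le_one_iff.2 ?_)
            have := mul_nonneg ht.le hnn
            linarith
          · exact hfC _
      _ = C := one_mul C
  · simpa using hC
  · refine ae_of_all _ fun w => ?_
    refine ENNReal.Tendsto.mul_const ((ENNReal.continuous_ofReal.tendsto _).comp
      ((continuous_exp.tendsto _).comp ?_)) (Or.inr (ne_top_of_le_ne_top hC (hfC _)))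
    exact ((tendsto_trapSum (uniformContinuous_pathSq a x w)).const_mul t).neg

/-- The law of the endpoint `x + √(2 t) w(1)` under the Wiener measure weighted by the exponential
functional has the Mehler kernel as its Lebesgue density. -/
lemma map_weighted_eq {μ : Measure CW} (hμ : IsWienerMeasure μ) {t : ℝ} (ht : 0 < t) (x : ℝ) :
    (μ.withDensity fun w => ENNReal.ofReal
        (exp (-(t * ∫ s in (0:ℝ)..1, pathSq √(2 * t) x w s)))).map
      (fun w => x + √(2 * t) * w.eval 1) =
    volume.withDensity fun z => ENNReal.ofReal (mehler 1 (2 * t) x z) := by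
  have := hμ.prob
  have hI := measurable_integral_pathSq √(2 * t) x
  have he := measurable_eval 1
  have hdm : Measurable fun w : CW => ENNReal.ofReal
      (exp (-(t * ∫ s in (0:ℝ)..1, pathSq √(2 * t) x w s))) := by fun_prop
  have hem : Measurable fun w : CW => x + √(2 * t) * w.eval 1 := by fun_prop
  have hle : ∀ w : CW, ENNReal.ofReal
      (exp (-(t * ∫ s in (0:ℝ)..1, pathSq √(2 * t) x w s))) ≤ 1 := by
    intro w
    rw [← ENNReal.ofReal_one]
    refine ENNReal.ofReal_le_ofReal (exp_le_one_iff.2 ?_)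
    have h0 : 0 ≤ ∫ s in (0:ℝ)..1, pathSq √(2 * t) x w s :=
      intervalIntegral.integral_nonneg zero_le_one fun s _ => sq_nonneg _
    have := mul_nonneg ht.le h0
    linarith
  have hfin : IsFiniteMeasure (μ.withDensity fun w => ENNReal.ofReal
      (exp (-(t * ∫ s in (0:ℝ)..1, pathSq √(2 * t) x w s)))) := by
    refine isFiniteMeasure_withDensity (ne_top_of_le_ne_top ENNReal.one_ne_top ?_)
    calc _ ≤ ∫⁻ _, 1 ∂μ := lintegral_mono hle
      _ = 1 := by simp
  refine ext_of_forall_lintegral_eq_of_IsFiniteMeasure fun f => ?_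
  have hf : Measurable fun z => (f z : ℝ≥0∞) := by
    have := f.continuous.measurable
    fun_prop
  have hfC : ∀ z, (f z : ℝ≥0∞) ≤ (nndist f 0 : ℝ≥0∞) := fun z =>
    ENNReal.coe_le_coe.2 (BoundedContinuousFunction.NNReal.upper_bound f z)
  rw [lintegral_map hf hem, lintegral_withDensity_eq_lintegral_mul _ hdm
      (g := fun w : CW => (f (x + √(2 * t) * w.eval 1) : ℝ≥0∞)) (hf.comp hem),
    lintegral_withDensity_eq_lintegral_mul _ (by unfold mehler; fun_prop) hf]
  have h1 := tendsto_lintegral_trapSum μ ht √(2 * t) x hf ENNReal.coe_ne_top hfC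
  simp_rw [discrete_mehler hμ ht x hf] at h1
  exact tendsto_nhds_unique h1 (tendsto_lintegral_mehler ht x hf ENNReal.coe_ne_top hfC)

/-- **Proposition (Mehler formula as a Wiener integral).** If `v₀` is measurable and the
Mehler-type Gaussian integral of `|v₀|` is finite for all `t > 0` and `x`, then the
Wiener integral `∫_{C_W} v₀(√(2t) w(1)+x) exp(−t∫₀¹ (x+√(2t)w(s))² ds) dm_W(w)` equals
the Mehler integral of `v₀`. -/
theorem wiener_integral_eq_mehler
    (μ : Measure CW) (hμ : IsWienerMeasure μ)
    (v₀ : ℝ → ℝ) (hv₀ : Measurable v₀)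
    (hint : ∀ t > (0:ℝ), ∀ x : ℝ, Integrable (fun y : ℝ =>
      (Real.sqrt (2 * π * Real.sinh (2 * t)))⁻¹ *
        Real.exp (-(1 / 2) * (Real.cosh (2 * t) / Real.sinh (2 * t)) * y ^ 2
          - (1 / 2) * (Real.sinh (2 * t) / Real.cosh (2 * t)) * x ^ 2) *
        |v₀ (y + x / Real.cosh (2 * t))|)) :
    ∀ t > (0:ℝ), ∀ x : ℝ,
      (∫ w : CW, v₀ (Real.sqrt (2 * t) * w.eval 1 + x) *
        Real.exp (-(t * ∫ s in (0:ℝ)..1, (x + Real.sqrt (2 * t) * w.eval s) ^ 2)) ∂μ) =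
      ∫ y : ℝ, (Real.sqrt (2 * π * Real.sinh (2 * t)))⁻¹ *
        Real.exp (-(1 / 2) * (Real.cosh (2 * t) / Real.sinh (2 * t)) * y ^ 2
          - (1 / 2) * (Real.sinh (2 * t) / Real.cosh (2 * t)) * x ^ 2) *
        v₀ (y + x / Real.cosh (2 * t)) := by
  intro t ht x
  have hI := measurable_integral_pathSq √(2 * t) x
  have he := measurable_eval 1
  have hdm : Measurable fun w : CW => ENNReal.ofReal
      (exp (-(t * ∫ s in (0:ℝ)..1, pathSq √(2 * t) x w s))) := by fun_prop
  have hem : Measurable fun w : CW => x + √(2 * t) * w.eval 1 := by fun_prop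
  have hkm : Measurable fun z => ENNReal.ofReal (mehler 1 (2 * t) x z) := by
    unfold mehler; fun_prop
  have key := congrArg (fun ν : Measure ℝ => ∫ z, v₀ z ∂ν) (map_weighted_eq hμ ht x)
  beta_reduce at key
  rw [integral_map hem.aemeasurable hv₀.aestronglyMeasurable,
    integral_withDensity_eq_integral_toReal_smul hdm (ae_of_all _ fun _ => ENNReal.ofReal_lt_top),
    integral_withDensity_eq_integral_toReal_smul hkm (ae_of_all _ fun _ => ENNReal.ofReal_lt_top)]
    at key
  calc _ = _ := integral_congr_ae (ae_of_all _ fun w => ?_)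
    _ = _ := key
    _ = _ := (integral_add_right_eq_self _ (x / cosh (2 * t))).symm
    _ = _ := integral_congr_ae (ae_of_all _ fun y => ?_)
  · simp only [smul_eq_mul]
    rw [ENNReal.toReal_ofReal (exp_pos _).le, mul_comm, add_comm x]
    rfl
  · simp only [smul_eq_mul]
    rw [ENNReal.toReal_ofReal (mehler_nonneg _ _ _ _), mehler_eq_shift 1 (by positivity),
      add_sub_cancel_right, one_div (2 * π * sinh (2 * t)), sqrt_inv]

end
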